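/- Let b be a prime, alpha, m, s in N and t in N_0, and let C_1,...,C_{alpha*s} in F_b^{m x m} be generating matrices of a digital net P over F_b in dimension alpha*s satisfying mu_1(P^perp) >= m - t + 1 (i.e., P is a digital (t, m, alpha*s)-net). Define matrices D_1,...,D_s in F_b^{alpha*m x m} by letting, for 1 <= h <= m and 1 <= i <= alpha, the (alpha(h-1)+i)-th row of D_j be the h-th row of C_{alpha(j-1)+i}. Then the digital net Q over F_b with generating matrices D_1,...,D_s satisfies mu_alpha(Q^perp) >= alpha*m - alpha*min(m, t + floor(s(alpha-1)/2)) + 1; that is, Q is an order alpha digital (t_alpha, m, s)-net over F_b with t_alpha <= alpha*min(m, t + floor(s(alpha-1)/2)). -/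

import Mathlib

open MeasureTheory Finset Matrix

noncomputable section

/-- The `i`-th `b`-adic digit of a natural number `k`. -/
def ndigit (b k i : ℕ) : ℕ := k / b ^ i % b

/-- The truncated digit vector `ν_n(k) ∈ F_b^n`. -/
def digitVec (b n : ℕ) (k : ℕ) : Fin n → ZMod b := fun i => (ndigit b k i.val : ZMod b)

/-- The dual net of the digital net with generating matrices `C_1,...,C_s ∈ F_b^{n×m}`. -/
def dualNet {s n m : ℕ} (b : ℕ) (C : Fin s → Matrix (Fin n) (Fin m) (ZMod b)) :
    Set (Fin s → ℕ) :=
  {k | ∑ j, (C j)ᵀ.mulVec (digitVec b n (k j)) = 0}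

/-- The list of positions (in decreasing order) of the nonzero `b`-adic digits of `k`;
position `i` corresponds to the digit of `b^i`, i.e. to the exponent `c - 1` in the paper. -/
def nzPos (b k : ℕ) : List ℕ :=
  (((Finset.range k).filter fun i => ndigit b k i ≠ 0).sort (· ≤ ·)).reverse

/-- The Dick weight function `μ_α` (for `α = 1` the NRT weight). -/
def dickWeight (b α k : ℕ) : ℕ := (((nzPos b k).take α).map (· + 1)).sum

/-- The Dick weight of a vector of nonnegative integers. -/
def dickWeightV (b α : ℕ) {s : ℕ} (k : Fin s → ℕ) : ℕ := ∑ j, dickWeight b α (k j)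

/-- `μ_α(P^⊥)`, the minimal Dick weight over nonzero elements of the dual net. -/
def minWeight {s n m : ℕ} (b α : ℕ) (C : Fin s → Matrix (Fin n) (Fin m) (ZMod b)) : ℕ :=
  sInf (dickWeightV b α '' {k | k ∈ dualNet b C ∧ k ≠ 0})

/-- The list `κ_1 b^{c_1-1}, κ_2 b^{c_2-1}, ...` of nonzero terms of the `b`-adic
expansion of `k`, in decreasing order of the exponents. -/
def nzTerms (b k : ℕ) : List ℕ := (nzPos b k).map fun i => ndigit b k i * b ^ i

/-- `k^{(p)}`: the number `k` with its `p` most significant nonzero digits removed. -/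
def trunc (b p k : ℕ) : ℕ := ((nzTerms b k).drop p).sum

/-- The term `κ_p b^{c_p-1}` (with the convention `κ_0 b^{c_0-1} = 0`). -/
def topTerm (b p k : ℕ) : ℕ := if p = 0 then 0 else (nzTerms b k).getD (p - 1) 0

/-- `(k,l)` is of type `(p,q)`. -/
def IsType (b p q k l : ℕ) : Prop :=
  if k = l then p = 0 ∧ q = 0
  else trunc b p k = trunc b q l ∧ topTerm b p k ≠ topTerm b q l

/-- `(k,l) ∈ T_{≥ α}`: `(k,l)` is of type `(p,q)` for some `p + q ≥ α`. -/
def TGe (b α k l : ℕ) : Prop := ∃ p q : ℕ, α ≤ p + q ∧ IsType b p q k l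

/-- `(k,l) ∈ T_{≥ α}` for vectors: some coordinate pair lies in `T_{≥ α}`. -/
def TGeV (b α : ℕ) {s : ℕ} (k l : Fin s → ℕ) : Prop := ∃ j, TGe b α (k j) (l j)

/-- The `(i+1)`-st `b`-adic digit `ξ_{i+1}` of `x ∈ [0,1]` (for `x ≠ 1` the unique expansion
with infinitely many digits different from `b-1`; for `x = 1` all digits equal `b-1`). -/
def rdigit (b : ℕ) (x : ℝ) (i : ℕ) : ℕ :=
  if x = 1 then b - 1 else (⌊x * (b : ℝ) ^ (i + 1)⌋).toNat % b

/-- The `k`-th `b`-adic Walsh function. -/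
def walsh (b k : ℕ) (x : ℝ) : ℂ :=
  Complex.exp (2 * (Real.pi : ℂ) * Complex.I *
    ((∑ i ∈ Finset.range k, ndigit b k i * rdigit b x i : ℕ) : ℂ) / (b : ℂ))

/-- The multivariate `b`-adic Walsh function. -/
def walshV (b : ℕ) {s : ℕ} (k : Fin s → ℕ) (x : Fin s → ℝ) : ℂ := ∏ j, walsh b (k j) (x j)

/-- The unit cube `[0,1]^s`. -/
def cube (s : ℕ) : Set (Fin s → ℝ) := Set.univ.pi fun _ => Set.Icc 0 1

/-- The `(k,l)`-th Walsh coefficient of a kernel `K : [0,1]^s × [0,1]^s → ℝ`. -/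
def walshCoeff (b : ℕ) {s : ℕ} (K : (Fin s → ℝ) → (Fin s → ℝ) → ℝ) (k l : Fin s → ℕ) : ℂ :=
  ∫ x in cube s, ∫ y in cube s,
    (K x y : ℂ) * (starRingEnd ℂ) (walshV b k x) * walshV b l y

/-- The `b`-adic digital shift `x ⊕ y` of reals `x, y ∈ [0,1]`. -/
def dshift (b : ℕ) (x y : ℝ) : ℝ :=
  ∑' i : ℕ, (((rdigit b x i + rdigit b y i) % b : ℕ) : ℝ) / (b : ℝ) ^ (i + 1)

/-- Componentwise digital shift of vectors in `[0,1]^s`. -/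
def dshiftV (b : ℕ) {s : ℕ} (x y : Fin s → ℝ) : Fin s → ℝ := fun j => dshift b (x j) (y j)

/-- The `h`-th point of the digital net with generating matrices `C_1,...,C_s ∈ F_b^{n×m}`. -/
def netPoint {s n m : ℕ} (b : ℕ) (C : Fin s → Matrix (Fin n) (Fin m) (ZMod b)) (h : ℕ) :
    Fin s → ℝ :=
  fun j => ∑ i : Fin n, (((C j).mulVec (digitVec b m h) i).val : ℝ) / (b : ℝ) ^ (i.val + 1)

open Classical in
/-- The squared `L_2`-discrepancy of the point multiset `pts 0, ..., pts (N-1)` in `[0,1]^s`. -/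
def sqL2 {s : ℕ} (N : ℕ) (pts : ℕ → (Fin s → ℝ)) : ℝ :=
  ∫ y in cube s,
    ((∑ h ∈ Finset.range N, if ∀ j, 0 ≤ pts h j ∧ pts h j < y j then (1 : ℝ) else 0) / N
      - ∏ j, y j) ^ 2

/-- The Bernoulli polynomial `B_r` evaluated at a real `x`. -/
def bpoly (r : ℕ) (x : ℝ) : ℝ := Polynomial.aeval x (Polynomial.bernoulli r)

/-- The one-dimensional reproducing kernel `K_α` of the Sobolev space of smoothness `α`. -/
def sobKer1 (α : ℕ) (x y : ℝ) : ℝ :=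
  ∑ r ∈ Finset.range (α + 1), bpoly r x * bpoly r y / ((r.factorial : ℝ)) ^ 2
    + (-1 : ℝ) ^ (α + 1) * bpoly (2 * α) |x - y| / ((2 * α).factorial : ℝ)

/-- The `s`-fold product kernel `K_{α,s}`. -/
def sobKer (α : ℕ) {s : ℕ} (x y : Fin s → ℝ) : ℝ := ∏ j, sobKer1 α (x j) (y j)

/-- The constant `C_{τ,b}`. -/
def Ctau (b τ : ℕ) : ℝ :=
  if τ ≤ 1 then 1 / (2 * Real.sin (Real.pi / b))
  else (1 + 1 / (b : ℝ) + 1 / ((b : ℝ) * ((b : ℝ) + 1))) ^ (τ - 2)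
      / (2 * Real.sin (Real.pi / b)) ^ τ

end

/-!
Reading the digits of `k_j` in the residue classes modulo `α` of their positions splits
`k ∈ Q^⊥` into a vector `l ∈ P^⊥` with `αs` coordinates, and `l ≠ 0` when `k ≠ 0`. If the leading
digit of the `i`-th section of `k_j` has weight `w_i > 0`, then `k_j` has a nonzero digit of weight
`α (w_i - 1) + i + 1 = α w_i - (α - 1 - i)`. These `α` positions are distinct, so together they
contribute at most `μ_α(k_j)`, which gives `α μ_1(l) ≤ μ_α(k) + s α (α - 1) / 2`. Rounding
`s (α - 1) / 2` down costs at most `α / 2`, which is less than the surplus `α` in `α (m - t + 1)`.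
-/

section

variable {b k α m n s t : ℕ}

theorem sum_le_sum_map_take_of_pairwise {ι M : Type*} [AddCommMonoid M] [PartialOrder M]
    [IsOrderedAddMonoid M] [CanonicallyOrderedAdd M] {f : ι → M} {L : List ι}
    (hL : L.Pairwise fun x y => f y ≤ f x) {a : ℕ} {A : Finset ι} (hA : ∀ x ∈ A, x ∈ L)
    (hcard : #A ≤ a) : ∑ x ∈ A, f x ≤ ((L.take a).map f).sum := by
  classical
  induction L generalizing a A with
  | nil => simp [Finset.eq_empty_of_forall_notMem fun x hx => List.not_mem_nil (hA x hx)]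
  | cons y L ih =>
    obtain ⟨hy, hL⟩ := List.pairwise_cons.mp hL
    rcases A.eq_empty_or_nonempty with rfl | hne
    · simp
    obtain ⟨a, rfl⟩ := Nat.exists_eq_add_one.mpr (hne.card_pos.trans_le hcard)
    obtain ⟨x, hx, hxy, hrest⟩ : ∃ x ∈ A, f x ≤ f y ∧ ∀ z ∈ A.erase x, z ∈ L := by
      by_cases hyA : y ∈ A
      · exact ⟨y, hyA, le_rfl, fun z hz =>
          (List.mem_cons.mp (hA z (mem_of_mem_erase hz))).resolve_left (ne_of_mem_erase hz)⟩
      · have hAL : ∀ z ∈ A, z ∈ L := fun z hz =>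
          (List.mem_cons.mp (hA z hz)).resolve_left (ne_of_mem_of_not_mem hz hyA)
        obtain ⟨x, hx⟩ := hne
        exact ⟨x, hx, hy x (hAL x hx), fun z hz => hAL z (mem_of_mem_erase hz)⟩
    calc ∑ z ∈ A, f z = f x + ∑ z ∈ A.erase x, f z := (add_sum_erase A f hx).symm
      _ ≤ f y + ((L.take a).map f).sum :=
        add_le_add hxy (ih hL hrest (by rw [card_erase_of_mem hx]; omega))
      _ = (((y :: L).take (a + 1)).map f).sum := by simp

theorem sum_val_rev_eq_choose_two (α : ℕ) : ∑ i : Fin α, (i.rev : ℕ) = α.choose 2 := by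
  calc ∑ i : Fin α, (i.rev : ℕ) = ∑ i : Fin α, (i : ℕ) :=
        Equiv.sum_comp Fin.revPerm fun i : Fin α => (i : ℕ)
    _ = ∑ i ∈ range α, i := Fin.sum_univ_eq_sum_range (fun i => i) α
    _ = α.choose 2 := by rw [sum_range_id, Nat.choose_two_right]

theorem ndigit_lt (hb : 0 < b) (k i : ℕ) : ndigit b k i < b := Nat.mod_lt _ hb

@[simp] theorem ndigit_zero_left (b i : ℕ) : ndigit b 0 i = 0 := by simp [ndigit]

theorem lt_of_ndigit_ne_zero (hb : 1 < b) {i : ℕ} (h : ndigit b k i ≠ 0) : i < k := by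
  contrapose! h
  rw [ndigit, Nat.div_eq_of_lt (h.trans_lt (Nat.lt_pow_self hb)), Nat.zero_mod]

theorem exists_ndigit_ne_zero (hb : 1 < b) (hk : k ≠ 0) : ∃ i, ndigit b k i ≠ 0 := by
  refine ⟨Nat.log b k, ?_⟩
  have hlt : k / b ^ Nat.log b k < b :=
    Nat.div_lt_of_lt_mul (pow_succ b _ ▸ Nat.lt_pow_succ_log_self hb k)
  rw [ndigit, Nat.mod_eq_of_lt hlt]
  exact (Nat.div_pos (Nat.pow_log_le_self b hk) (by positivity)).ne'

theorem ndigit_ofDigits {L : List ℕ} (hL : ∀ d ∈ L, d < b) (i : ℕ) :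
    ndigit b (Nat.ofDigits b L) i = L.getD i 0 := by
  induction L generalizing i with
  | nil => simp
  | cons d L ih =>
    obtain ⟨hd, hL⟩ := List.forall_mem_cons.mp hL
    rw [Nat.ofDigits_cons]
    cases i with
    | zero => simp [ndigit, Nat.mod_eq_of_lt hd]
    | succ i =>
      rw [List.getD_cons_succ, ← ih hL i, ndigit, ndigit, pow_succ', ← Nat.div_div_eq_div_mul,
        Nat.add_mul_div_left _ _ (Nat.zero_lt_of_lt hd), Nat.div_eq_of_lt hd, zero_add]

theorem digitVec_base_pow (hb : 0 < b) (n : ℕ) : digitVec b n (b ^ n) = 0 := by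
  ext i
  have hdvd : b ∣ b ^ n / b ^ (i : ℕ) := by
    rw [Nat.pow_div i.isLt.le hb]
    exact dvd_pow_self b (Nat.sub_ne_zero_of_lt i.isLt)
  simp [digitVec, ndigit, Nat.mod_eq_zero_of_dvd hdvd]

theorem mem_nzPos {i : ℕ} : i ∈ nzPos b k ↔ i < k ∧ ndigit b k i ≠ 0 := by
  simp [nzPos]

theorem pairwise_nzPos (b k : ℕ) : (nzPos b k).Pairwise (· ≥ ·) :=
  List.pairwise_reverse.mpr (Finset.pairwise_sort _ _)

theorem sum_le_dickWeight (hb : 1 < b) {A : Finset ℕ} (hA : ∀ i ∈ A, ndigit b k i ≠ 0)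
    (hcard : #A ≤ α) : ∑ i ∈ A, (i + 1) ≤ dickWeight b α k :=
  sum_le_sum_map_take_of_pairwise ((pairwise_nzPos b k).imp Nat.succ_le_succ)
    (fun i hi => mem_nzPos.mpr ⟨lt_of_ndigit_ne_zero hb (hA i hi), hA i hi⟩) hcard

theorem dickWeight_pos (hb : 1 < b) (hα : 0 < α) (hk : k ≠ 0) : 0 < dickWeight b α k := by
  obtain ⟨i, hi⟩ := exists_ndigit_ne_zero hb hk
  have hle := sum_le_dickWeight (A := {i}) (α := α) hb (by simpa using hi)
    (by simpa using Nat.succ_le_of_lt hα)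
  rw [sum_singleton] at hle
  exact i.succ_pos.trans_le hle

theorem dickWeightV_pos (hb : 1 < b) (hα : 0 < α) {k : Fin s → ℕ} (hk : k ≠ 0) :
    0 < dickWeightV b α k := by
  obtain ⟨j, hj⟩ := Function.ne_iff.mp hk
  exact sum_pos' (fun _ _ => Nat.zero_le _) ⟨j, mem_univ j, dickWeight_pos hb hα hj⟩

theorem ndigit_ne_zero_of_dickWeight_one_eq_succ {c : ℕ} (h : dickWeight b 1 k = c + 1) :
    ndigit b k c ≠ 0 := by
  suffices c ∈ nzPos b k from (mem_nzPos.mp this).2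
  unfold dickWeight at h
  cases hL : nzPos b k with
  | nil => simp [hL] at h
  | cons i L =>
    obtain rfl : i = c := by simpa [hL] using h
    exact List.mem_cons_self

theorem minWeight_le {C : Fin s → Matrix (Fin n) (Fin m) (ZMod b)} {k : Fin s → ℕ}
    (hk : k ∈ dualNet b C) (hk0 : k ≠ 0) (α : ℕ) : minWeight b α C ≤ dickWeightV b α k :=
  Nat.sInf_le ⟨k, ⟨hk, hk0⟩, rfl⟩

theorem exists_dickWeightV_eq_minWeight (hb : 0 < b) (hs : 0 < s) (α : ℕ)
    (C : Fin s → Matrix (Fin n) (Fin m) (ZMod b)) :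
    ∃ k ∈ dualNet b C, k ≠ 0 ∧ dickWeightV b α k = minWeight b α C := by
  have hmem : (fun _ => b ^ n) ∈ dualNet b C := by simp [dualNet, digitVec_base_pow hb]
  have hne : (fun _ : Fin s => b ^ n) ≠ 0 := Function.ne_iff.mpr ⟨⟨0, hs⟩, (pow_pos hb n).ne'⟩
  obtain ⟨k, ⟨hk, hk0⟩, hkmin⟩ := Nat.sInf_mem (Set.Nonempty.image (dickWeightV b α)
    (⟨_, hmem, hne⟩ : {k | k ∈ dualNet b C ∧ k ≠ 0}.Nonempty))
  exact ⟨k, hk, hk0, hkmin⟩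

theorem minWeight_pos (hb : 1 < b) (hα : 0 < α) (hs : 0 < s)
    (C : Fin s → Matrix (Fin n) (Fin m) (ZMod b)) : 0 < minWeight b α C := by
  obtain ⟨k, -, hk0, hkmin⟩ := exists_dickWeightV_eq_minWeight (zero_lt_one.trans hb) hs α C
  exact hkmin ▸ dickWeightV_pos hb hα hk0

/-- The `i`-th digit section of `k` modulo `α`: the number whose `h`-th `b`-adic digit is the digit
of `k` at position `α h + i`. For `b > 1` the cutoff `h < k` loses no nonzero digit. -/
def digitSection (b : ℕ) {α : ℕ} (i : Fin α) (k : ℕ) : ℕ :=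
  Nat.ofDigits b ((List.range k).map fun h => ndigit b k (α * h + i))

theorem ndigit_digitSection (hb : 1 < b) (i : Fin α) (k h : ℕ) :
    ndigit b (digitSection b i k) h = ndigit b k (α * h + i) := by
  rw [digitSection, ndigit_ofDigits (by simp [ndigit_lt (zero_lt_one.trans hb)])]
  by_cases hk : h < k
  · simp [hk]
  · have hle : h ≤ α * h + i := (Nat.le_mul_of_pos_left h i.pos).trans (Nat.le_add_right _ _)
    have hzero : ndigit b k (α * h + i) = 0 := by
      by_contra hne
      exact hk (hle.trans_lt (lt_of_ndigit_ne_zero hb hne))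
    simp [hk, hzero]

theorem mul_sum_dickWeight_one_digitSection_le (hb : 1 < b) (α k : ℕ) :
    α * ∑ i : Fin α, dickWeight b 1 (digitSection b i k) ≤ dickWeight b α k + α.choose 2 := by
  set w : Fin α → ℕ := fun i => dickWeight b 1 (digitSection b i k)
  set pos : Fin α → ℕ := fun i => α * (w i - 1) + i
  have hpos_inj : Function.Injective pos := fun i j hij => by
    simpa [pos, Nat.mul_add_mod, Nat.mod_eq_of_lt, Fin.val_inj] using congrArg (· % α) hij
  have hpos_digit (i : Fin α) (hi : w i ≠ 0) : ndigit b k (pos i) ≠ 0 := by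
    rw [← ndigit_digitSection hb]
    exact ndigit_ne_zero_of_dickWeight_one_eq_succ (Nat.succ_pred_eq_of_ne_zero hi).symm
  have hweight : ∑ i with w i ≠ 0, (pos i + 1) ≤ dickWeight b α k := by
    rw [← sum_image (f := (· + 1)) hpos_inj.injOn]
    refine sum_le_dickWeight hb (by simpa using hpos_digit) ?_
    exact card_image_le.trans ((card_le_univ _).trans_eq (Fintype.card_fin α))
  have hpoint (i : Fin α) : α * w i ≤ (if w i ≠ 0 then pos i + 1 else 0) + i.rev := by
    rcases hw : w i with - | v
    · simp
    · simp only [ne_eq, Nat.add_one_ne_zero, not_false_eq_true, if_true, pos, hw, Fin.val_rev,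
        Nat.add_sub_cancel, mul_add_one]
      omega
  calc α * ∑ i, w i ≤ ∑ i, ((if w i ≠ 0 then pos i + 1 else 0) + (i.rev : ℕ)) := by
        rw [mul_sum]
        exact sum_le_sum fun i _ => hpoint i
    _ = ∑ i with w i ≠ 0, (pos i + 1) + α.choose 2 := by
        rw [sum_add_distrib, sum_filter, sum_val_rev_eq_choose_two]
    _ ≤ dickWeight b α k + α.choose 2 := Nat.add_le_add_right hweight _

/-- The enumeration `(h, i) ↦ α h + i` of `n` consecutive blocks of length `α`; it indexes both the
rows of interlaced matrices and the coordinates of the net to be interlaced. -/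
def finBlockEquiv (α n : ℕ) : Fin n × Fin α ≃ Fin (α * n) :=
  finProdFinEquiv.trans (finCongr (Nat.mul_comm n α))

@[simp] theorem val_finBlockEquiv (h : Fin n) (i : Fin α) :
    (finBlockEquiv α n (h, i) : ℕ) = α * h + i := by
  simp [finBlockEquiv, add_comm]

theorem sum_fin_mul {M : Type*} [AddCommMonoid M] (f : Fin (α * n) → M) :
    ∑ p, f p = ∑ h, ∑ i, f (finBlockEquiv α n (h, i)) := by
  rw [← (finBlockEquiv α n).sum_comp, Fintype.sum_prod_type]

/-- Digit interlacing of generating matrices with interlacing factor `α`: row `α h + i` of the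
`j`-th matrix is row `h` of `C (α j + i)`, with all indices starting at `0`. -/
def interlace {R : Type*} (C : Fin (α * s) → Matrix (Fin n) (Fin m) R) (j : Fin s) :
    Matrix (Fin (α * n)) (Fin m) R :=
  fun r => C (finBlockEquiv α s (j, ((finBlockEquiv α n).symm r).2)) ((finBlockEquiv α n).symm r).1

theorem interlace_finBlockEquiv {R : Type*} (C : Fin (α * s) → Matrix (Fin n) (Fin m) R)
    (j : Fin s) (h : Fin n) (i : Fin α) :
    interlace C j (finBlockEquiv α n (h, i)) = C (finBlockEquiv α s (j, i)) h := by
  simp [interlace]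

/-- The inverse of digit interlacing on vectors of numbers: coordinate `α j + i` is the `i`-th digit
section of `k j`. -/
def deinterlace (b α : ℕ) (k : Fin s → ℕ) (p : Fin (α * s)) : ℕ :=
  digitSection b ((finBlockEquiv α s).symm p).2 (k ((finBlockEquiv α s).symm p).1)

theorem deinterlace_finBlockEquiv (b : ℕ) (k : Fin s → ℕ) (j : Fin s) (i : Fin α) :
    deinterlace b α k (finBlockEquiv α s (j, i)) = digitSection b i (k j) := by
  simp [deinterlace]

theorem deinterlace_ne_zero (hb : 1 < b) (hα : 0 < α) {k : Fin s → ℕ} (hk : k ≠ 0) :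
    deinterlace b α k ≠ 0 := by
  obtain ⟨j, hj⟩ := Function.ne_iff.mp hk
  obtain ⟨r, hr⟩ := exists_ndigit_ne_zero hb hj
  let i : Fin α := ⟨r % α, Nat.mod_lt r hα⟩
  refine Function.ne_iff.mpr ⟨finBlockEquiv α s (j, i), fun hzero => hr ?_⟩
  rw [deinterlace_finBlockEquiv] at hzero
  calc ndigit b (k j) r = ndigit b (digitSection b i (k j)) (r / α) := by
        rw [ndigit_digitSection hb, Nat.div_add_mod]
    _ = 0 := by rw [hzero, Pi.zero_apply, ndigit_zero_left]

theorem deinterlace_mem_dualNet_iff (hb : 1 < b) {k : Fin s → ℕ}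
    {C : Fin (α * s) → Matrix (Fin n) (Fin m) (ZMod b)} :
    deinterlace b α k ∈ dualNet b C ↔ k ∈ dualNet b (interlace C) := by
  suffices ∑ p, (C p)ᵀ *ᵥ digitVec b n (deinterlace b α k p) =
      ∑ j, (interlace C j)ᵀ *ᵥ digitVec b (α * n) (k j) by
    simp only [dualNet, Set.mem_ofPred_eq, this]
  simp only [mulVec_transpose, vecMul_eq_sum, digitVec]
  simp only [sum_fin_mul, interlace_finBlockEquiv, deinterlace_finBlockEquiv,
    ndigit_digitSection hb, val_finBlockEquiv]
  exact sum_congr rfl fun j _ => sum_comm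

theorem mul_dickWeightV_one_deinterlace_le (hb : 1 < b) (α : ℕ) (k : Fin s → ℕ) :
    α * dickWeightV b 1 (deinterlace b α k) ≤ dickWeightV b α k + s * α.choose 2 := by
  calc α * dickWeightV b 1 (deinterlace b α k)
      = ∑ j, α * ∑ i : Fin α, dickWeight b 1 (digitSection b i (k j)) := by
        simp only [dickWeightV, sum_fin_mul, deinterlace_finBlockEquiv, mul_sum]
    _ ≤ ∑ j, (dickWeight b α (k j) + α.choose 2) :=
        sum_le_sum fun j _ => mul_sum_dickWeight_one_digitSection_le hb α (k j)
    _ = dickWeightV b α k + s * α.choose 2 := by simp [dickWeightV, sum_add_distrib]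

theorem mul_minWeight_one_le_minWeight_interlace (hb : 1 < b) (hα : 0 < α) (hs : 0 < s)
    (C : Fin (α * s) → Matrix (Fin n) (Fin m) (ZMod b)) :
    α * minWeight b 1 C ≤ minWeight b α (interlace C) + s * α.choose 2 := by
  obtain ⟨k, hk, hk0, hkmin⟩ :=
    exists_dickWeightV_eq_minWeight (zero_lt_one.trans hb) hs α (interlace C)
  calc α * minWeight b 1 C ≤ α * dickWeightV b 1 (deinterlace b α k) :=
        Nat.mul_le_mul_left α (minWeight_le ((deinterlace_mem_dualNet_iff hb).mpr hk)
          (deinterlace_ne_zero hb hα hk0) 1)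
    _ ≤ minWeight b α (interlace C) + s * α.choose 2 :=
        hkmin ▸ mul_dickWeightV_one_deinterlace_le hb α k

theorem two_mul_mul_choose_two_le (α s : ℕ) :
    2 * (s * α.choose 2) ≤ α * (2 * (s * (α - 1) / 2) + 1) := by
  have hchoose : 2 * α.choose 2 = α * (α - 1) := by
    rw [Nat.choose_two_right, Nat.mul_div_cancel' (Nat.even_mul_pred_self α).two_dvd]
  calc 2 * (s * α.choose 2) = α * (s * (α - 1)) := by
        rw [mul_left_comm, hchoose, mul_left_comm]
    _ ≤ α * (2 * (s * (α - 1) / 2) + 1) := Nat.mul_le_mul_left α (by omega)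

theorem stmt_7_general (hb : 1 < b) (hα : 0 < α) (hs : 0 < s)
    (C : Fin (α * s) → Matrix (Fin n) (Fin m) (ZMod b))
    (hC : (m : ℤ) - t + 1 ≤ minWeight b 1 C) :
    (α * m : ℤ) - α * min m (t + s * (α - 1) / 2) + 1 ≤ minWeight b α (interlace C) := by
  have hpos : 0 < minWeight b α (interlace C) := minWeight_pos hb hα hs _
  have hinterlace := mul_minWeight_one_le_minWeight_interlace hb hα hs C
  have hchoose := two_mul_mul_choose_two_le α s
  generalize s * (α - 1) / 2 = T at hchoose ⊢
  rcases le_total m (t + T) with hm | hm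
  · rw [min_eq_left hm]
    omega
  · rw [min_eq_right hm]
    have hscaled : (α : ℤ) * (m - t + 1) ≤ α * minWeight b 1 C :=
      mul_le_mul_of_nonneg_left hC (Int.natCast_nonneg α)
    zify at hinterlace hchoose hα
    push_cast
    linarith

end

/-- Lemma 3.8(1) (digit interlacing): if `P` is a digital `(t,m,αs)`-net over `F_b` with
generating matrices `C_1,...,C_{αs} ∈ F_b^{m×m}`, then the interlaced matrices
`D_1,...,D_s ∈ F_b^{αm×m}` generate an order `α` digital `(t_α,m,s)`-net over `F_b`
with `t_α ≤ α min(m, t + ⌊s(α-1)/2⌋)`. -/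
theorem stmt_7 (b : ℕ) (hb : b.Prime) (α m s : ℕ) (hα : 0 < α) (hm : 0 < m) (hs : 0 < s)
    (t : ℕ) (C : Fin (α * s) → Matrix (Fin m) (Fin m) (ZMod b))
    (hC : (m : ℤ) - t + 1 ≤ minWeight b 1 C)
    (D : Fin s → Matrix (Fin (α * m)) (Fin m) (ZMod b))
    (hD : ∀ (j : Fin s) (r : Fin (α * m)) (c : Fin m),
      D j r c = C ⟨α * j.val + r.val % α, by
          have h1 : r.val % α < α := Nat.mod_lt _ hα
          have h2 : j.val + 1 ≤ s := j.isLt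
          calc α * j.val + r.val % α < α * j.val + α := by omega
            _ = α * (j.val + 1) := by ring
            _ ≤ α * s := Nat.mul_le_mul_left α h2⟩
        ⟨r.val / α, Nat.div_lt_of_lt_mul r.isLt⟩ c) :
    (α * m : ℤ) - α * min m (t + s * (α - 1) / 2) + 1 ≤ minWeight b α D := by
  have hinterlace : D = interlace C := by
    ext j r c
    rw [hD, interlace]
    congr 2
    simp [finBlockEquiv, add_comm]
  exact hinterlace ▸ stmt_7_general hb.one_lt hα hs C hC
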